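/- The closed interval [-1,1] ⊆ ℝ with the Euclidean topology, the midpoint operation x ⊕ y = (x+y)/2, and the points -1 and 1, is a parametrised interval object in the category of topological spaces: for every topological space X, every midpoint-convex body (A, m) in the category of topological spaces, and all continuous maps f, g : X → A, there is a unique continuous map h : X × [-1,1] → A satisfying h(x, -1) = f(x), h(x, 1) = g(x), and h(x, s ⊕ t) = m(h(x,s), h(x,t)) for all x ∈ X and s, t ∈ [-1,1]. -/

import Mathlib

/-- A midpoint operation: idempotent, commutative, satisfying transposition. -/
def IsMidpoint {A : Type} (m : A → A → A) : Prop :=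
  (∀ x, m x x = x) ∧ (∀ x y, m x y = m y x) ∧
    (∀ x y z w, m (m x y) (m z w) = m (m x z) (m y w))

/-- Cancellation: `m x y = m x z` implies `y = z`. -/
def Cancellative {A : Type} (m : A → A → A) : Prop :=
  ∀ x y z, m x y = m x z → y = z

/-- Iterativity in the category of topological spaces. -/
def TopIterative {A : Type} [TopologicalSpace A] (m : A → A → A) : Prop :=
  ∀ (X : Type) [TopologicalSpace X], ∀ c : X → A × X, Continuous c →
    ∃! u : X → A, Continuous u ∧ ∀ x, u x = m (c x).1 (u (c x).2)

/-- The midpoint operation `x ⊕ y = (x+y)/2` on the closed interval `[a,b]`. -/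
noncomputable def iccMid (a b : ℝ) (x y : Set.Icc a b) : Set.Icc a b :=
  ⟨(x.1 + y.1) / 2,
    ⟨by have h1 := x.2.1; have h2 := y.2.1; linarith,
     by have h1 := x.2.2; have h2 := y.2.2; linarith⟩⟩

/-!
Prefixing a binary digit `k` to an expansion of `t ∈ [a, b]` yields the midpoint `e k ⊕ t` of `t`
with the endpoint `e k`. Hence a midpoint homomorphism `h` with endpoint values `p 0` and `p 1`
solves the corecursive equation `h (e k ⊕ t) = m (p k) (h t)`. Iterativity over *discrete* spaces
gives this equation exactly one solution for each `p`: existence only needs the two expansions of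
the centre to give the same value, and the solution preserves midpoints because `h (s ⊕ t)` and
`m (h s) (h t)` satisfy a common recursion in `(s, t)`. Iterativity over `(Fin 2 → A) × (ℕ → Fin 2)`
makes the solution jointly continuous in `p` and the digits, and continuity in `(p, t)` follows
because the map from the compact space of digit sequences onto `[a, b]` stays a quotient map after
taking the product with any space.
-/

open Set Topology

variable {A : Type} {m : A → A → A} {I : Type} {n : I → I → I}

namespace TopIterative

variable [TopologicalSpace A]

theorem existsUnique_of_discrete (hit : TopIterative m) {Y : Type} (c : Y → A × Y) :
    ∃! u : Y → A, ∀ y, u y = m (c y).1 (u (c y).2) := by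
  let _ : TopologicalSpace Y := ⊥
  have : DiscreteTopology Y := ⟨rfl⟩
  simpa only [continuous_of_discreteTopology, true_and] using
    hit Y c continuous_of_discreteTopology

theorem eq_of_eq_mid (hit : TopIterative m) {p q : A} (hp : m p p = p) (hq : q = m p q) :
    q = p :=
  congrFun ((hit.existsUnique_of_discrete fun y : Unit ↦ (p, y)).unique
    (y₁ := fun _ ↦ q) (y₂ := fun _ ↦ p) (fun _ ↦ hq) fun _ ↦ hp.symm) ()

end TopIterative

/-- The equation `h (e k ⊕ t) = m (p k) (h t)`, where `⊕` is the operation `n` on `I`: it prescribes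
what prefixing a digit `k`, realised in `I` by `t ↦ e k ⊕ t`, does to the value of `h`. -/
def DigitRecursion {ι : Type*} (m : A → A → A) (n : I → I → I) (e : ι → I) (p : ι → A)
    (h : I → A) : Prop :=
  ∀ k t, h (n (e k) t) = m (p k) (h t)

namespace DigitRecursion

section

variable [TopologicalSpace A] {ι : Type*} {e : ι → I} {p : ι → A} {h h' : I → A}

theorem unique (hit : TopIterative m) (hsurj : ∀ t, ∃ k s, n (e k) s = t)
    (hh : DigitRecursion m n e p h) (hh' : DigitRecursion m n e p h') : h = h' := by
  choose digit tail hdigit using hsurj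
  refine (hit.existsUnique_of_discrete fun t ↦ (p (digit t), tail t)).unique
    (fun t ↦ ?_) fun t ↦ ?_
  · rw [← hh, hdigit]
  · rw [← hh', hdigit]

theorem apply_digit (hm : IsMidpoint m) (hit : TopIterative m) (hn : IsMidpoint n)
    (hh : DigitRecursion m n e p h) (k : ι) : h (e k) = p k :=
  hit.eq_of_eq_mid (hm.1 _) <| by rw [← hh, hn.1]

end

variable {e : Fin 2 → I} {p : Fin 2 → A} {h : I → A}

theorem apply_mid_digits (hm : IsMidpoint m) (hn : IsMidpoint n)
    (hsurj : ∀ t, ∃ k s, n (e k) s = t) (hh : DigitRecursion m n e p h) (i j : Fin 2) (t : I) :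
    h (n (n (e i) (e j)) t) = m (m (p i) (p j)) (h t) := by
  obtain ⟨hid, hcomm, htransp⟩ := hm
  have apply_mid_first (i j : Fin 2) (s : I) :
      h (n (n (e i) (e j)) (n (e i) s)) = m (m (p i) (p j)) (h (n (e i) s)) := by
    rw [hn.2.2, hn.1, hh, hh, hh, htransp, hid]
  obtain rfl | hij := eq_or_ne i j
  · rw [hn.1, hid, hh]
  obtain ⟨k, s, rfl⟩ := hsurj t
  obtain rfl | rfl : k = i ∨ k = j := by omega
  · exact apply_mid_first k j s
  · rw [hn.2.1 (e i), hcomm (p i)]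
    exact apply_mid_first k i s

theorem map_mid [TopologicalSpace A] (hm : IsMidpoint m) (hit : TopIterative m) (hn : IsMidpoint n)
    (hsurj : ∀ t, ∃ k s, n (e k) s = t) (hh : DigitRecursion m n e p h) (s t : I) :
    h (n s t) = m (h s) (h t) := by
  choose digit tail hdigit using hsurj
  let c : I × I → A × (I × I) := fun q ↦
    (m (p (digit q.1)) (p (digit q.2)), (tail q.1, tail q.2))
  have mid_solves (q : I × I) : h (n q.1 q.2) = m (c q).1 (h (n (c q).2.1 (c q).2.2)) := by
    rw [← hh.apply_mid_digits hm hn fun t ↦ ⟨_, _, hdigit t⟩, hn.2.2, hdigit, hdigit]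
  have values_solve (q : I × I) :
      m (h q.1) (h q.2) = m (c q).1 (m (h (c q).2.1) (h (c q).2.2)) := by
    rw [hm.2.2, ← hh, ← hh, hdigit, hdigit]
  exact congrFun ((hit.existsUnique_of_discrete c).unique (y₁ := fun q ↦ h (n q.1 q.2))
    (y₂ := fun q ↦ m (h q.1) (h q.2)) mid_solves values_solve) (s, t)

theorem iff_endpoints_and_map_mid [TopologicalSpace A] (hm : IsMidpoint m) (hit : TopIterative m)
    (hn : IsMidpoint n) (hsurj : ∀ t, ∃ k s, n (e k) s = t) :
    DigitRecursion m n e p h ↔ (∀ k, h (e k) = p k) ∧ ∀ s t, h (n s t) = m (h s) (h t) :=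
  ⟨fun hh ↦ ⟨hh.apply_digit hm hit hn, hh.map_mid hm hit hn hsurj⟩,
    fun ⟨hp, hmid⟩ k t ↦ by rw [hmid, hp]⟩

end DigitRecursion

section Interval

variable {a b : ℝ} [TopologicalSpace A]

theorem isMidpoint_iccMid (a b : ℝ) : IsMidpoint (iccMid a b) := by
  refine ⟨fun x ↦ ?_, fun x y ↦ ?_, fun x y z w ↦ ?_⟩ <;>
  · ext
    simp only [iccMid]
    ring

/-- The endpoints of `[a, b]`, indexed by the binary digits: `a` for `0` and `b` for `1`. -/
def iccEndpoint (hab : a < b) : Fin 2 → Icc a b :=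
  ![⟨a, left_mem_Icc.2 hab.le⟩, ⟨b, right_mem_Icc.2 hab.le⟩]

theorem coe_iccEndpoint (hab : a < b) (k : Fin 2) :
    (iccEndpoint hab k : ℝ) = (b - a) * (k : ℕ) + a := by
  fin_cases k <;> simp [iccEndpoint]

theorem iccEndpoint_injective (hab : a < b) : Function.Injective (iccEndpoint hab) := by
  intro i j hij
  have hcoe := congrArg Subtype.val hij
  rw [coe_iccEndpoint, coe_iccEndpoint, add_left_inj, mul_right_inj' (sub_pos.2 hab).ne'] at hcoe
  exact Fin.ext (mod_cast hcoe)

theorem eq_or_eq_iccEndpoint_of_iccMid_eq (hab : a < b) {i j : Fin 2} {s t : Icc a b}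
    (hst : iccMid a b (iccEndpoint hab i) s = iccMid a b (iccEndpoint hab j) t) :
    (i = j ∧ s = t) ∨ (s = iccEndpoint hab j ∧ t = iccEndpoint hab i) := by
  obtain ⟨s, has, hsb⟩ := s
  obtain ⟨t, hat, htb⟩ := t
  simp only [iccMid, Subtype.ext_iff, coe_iccEndpoint] at hst ⊢
  fin_cases i <;> fin_cases j <;> grind

/-- The point of `[a, b]` with the given binary digits. -/
noncomputable def iccOfDigits (hab : a < b) (d : ℕ → Fin 2) : Icc a b :=
  (iccHomeoI a b hab).symm ⟨Real.ofDigits d, Real.ofDigits_nonneg d, Real.ofDigits_le_one d⟩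

theorem iccOfDigits_eq_iccMid (hab : a < b) (d : ℕ → Fin 2) :
    iccOfDigits hab d =
      iccMid a b (iccEndpoint hab (d 0)) (iccOfDigits hab fun i ↦ d (i + 1)) := by
  ext
  simp only [iccOfDigits, iccMid, iccHomeoI_symm_apply_coe, coe_iccEndpoint]
  rw [Real.ofDigits_eq_sum_add_ofDigits d 1, Finset.sum_range_one, Real.ofDigitsTerm]
  push_cast
  ring

theorem continuous_iccOfDigits (hab : a < b) : Continuous (iccOfDigits hab) :=
  (iccHomeoI a b hab).symm.continuous.comp (Real.continuous_ofDigits.subtype_mk _)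

theorem surjective_iccOfDigits (hab : a < b) : Function.Surjective (iccOfDigits hab) := by
  refine (iccHomeoI a b hab).symm.surjective.comp fun t ↦ ?_
  obtain ⟨d, -, hd⟩ := Real.ofDigits_SurjOn one_lt_two t.2
  exact ⟨d, Subtype.ext hd⟩

theorem exists_iccMid_iccEndpoint_eq (hab : a < b) (t : Icc a b) :
    ∃ k s, iccMid a b (iccEndpoint hab k) s = t := by
  obtain ⟨d, rfl⟩ := surjective_iccOfDigits hab t
  exact ⟨_, _, (iccOfDigits_eq_iccMid hab d).symm⟩

theorem isQuotientMap_prodMap_iccOfDigits (hab : a < b) (P : Type*) [TopologicalSpace P] :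
    IsQuotientMap (Prod.map id (iccOfDigits hab) : P × (ℕ → Fin 2) → P × Icc a b) :=
  have hproper := isProperMap_id.prodMap (continuous_iccOfDigits hab).isProperMap
  hproper.isClosedMap.isQuotientMap hproper.continuous
    (Function.surjective_id.prodMap (surjective_iccOfDigits hab))

theorem exists_digitRecursion_iccMid (hab : a < b) (hm : IsMidpoint m) (hit : TopIterative m)
    (p : Fin 2 → A) : ∃ h, DigitRecursion m (iccMid a b) (iccEndpoint hab) p h := by
  choose digit tail hdigit using exists_iccMid_iccEndpoint_eq hab
  obtain ⟨h, hh, -⟩ := hit.existsUnique_of_discrete fun t ↦ (p (digit t), tail t)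
  have digit_endpoint (k) : digit (iccEndpoint hab k) = k ∧
      tail (iccEndpoint hab k) = iccEndpoint hab k := by
    have hk := (hdigit (iccEndpoint hab k)).trans ((isMidpoint_iccMid a b).1 _).symm
    obtain hk | ⟨htail, hdig⟩ := eq_or_eq_iccEndpoint_of_iccMid_eq hab hk
    · exact hk
    · exact ⟨(iccEndpoint_injective hab hdig).symm, htail⟩
  have h_endpoint (k) : h (iccEndpoint hab k) = p k := by
    refine hit.eq_of_eq_mid (hm.1 _) ?_
    simpa only [digit_endpoint] using hh (iccEndpoint hab k)
  refine ⟨h, fun k t ↦ ?_⟩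
  rw [hh]
  -- If `e k ⊕ t` is the centre, its chosen digit may differ from `k`; commutativity of `m` then
  -- reconciles the two expansions.
  obtain ⟨hk, ht⟩ | ⟨ht, hk⟩ := eq_or_eq_iccEndpoint_of_iccMid_eq hab (hdigit _)
  · rw [hk, ht]
  · rw [ht, h_endpoint, hm.2.1, ← h_endpoint (digit _), ← hk]

theorem continuous_of_digitRecursion (hab : a < b) (hit : TopIterative m)
    {H : (Fin 2 → A) × Icc a b → A}
    (hH : ∀ p, DigitRecursion m (iccMid a b) (iccEndpoint hab) p fun t ↦ H (p, t)) :
    Continuous H := by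
  let c : (Fin 2 → A) × (ℕ → Fin 2) → A × ((Fin 2 → A) × (ℕ → Fin 2)) := fun q ↦
    (q.1 (q.2 0), (q.1, fun i ↦ q.2 (i + 1)))
  have continuous_eval : Continuous fun r : (Fin 2 → A) × Fin 2 ↦ r.1 r.2 :=
    continuous_prod_of_discrete_right.2 continuous_apply
  have hc : Continuous c :=
    (continuous_eval.comp (by fun_prop : Continuous fun q : (Fin 2 → A) × (ℕ → Fin 2) ↦
      (q.1, q.2 0))).prodMk (by fun_prop)
  obtain ⟨u, ⟨hu, hu_rec⟩, -⟩ := hit _ c hc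
  have hHu : H ∘ Prod.map id (iccOfDigits hab) = u := by
    refine (hit.existsUnique_of_discrete c).unique (fun ⟨p, d⟩ ↦ ?_) hu_rec
    simp only [Function.comp_apply, Prod.map_apply, id_eq]
    rw [iccOfDigits_eq_iccMid]
    exact hH p _ _
  rwa [(isQuotientMap_prodMap_iccOfDigits hab _).continuous_iff, hHu]

theorem exists_continuous_digitRecursion (hab : a < b) (hm : IsMidpoint m)
    (hit : TopIterative m) :
    ∃ H : (Fin 2 → A) × Icc a b → A, Continuous H ∧
      ∀ p, DigitRecursion m (iccMid a b) (iccEndpoint hab) p fun t ↦ H (p, t) := by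
  choose h hh using exists_digitRecursion_iccMid hab hm hit
  exact ⟨fun q ↦ h q.1 q.2, continuous_of_digitRecursion hab hit hh, hh⟩

end Interval

theorem parametrised_interval_object_in_Top_general {a b : ℝ} (hab : a < b)
    {X : Type*} [TopologicalSpace X] [TopologicalSpace A]
    (hm : IsMidpoint m) (hit : TopIterative m)
    {f g : X → A} (hf : Continuous f) (hg : Continuous g) :
    ∃! h : X × Icc a b → A,
      Continuous h ∧
      (∀ x, h (x, ⟨a, left_mem_Icc.2 hab.le⟩) = f x) ∧
      (∀ x, h (x, ⟨b, right_mem_Icc.2 hab.le⟩) = g x) ∧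
      ∀ x s t, h (x, iccMid a b s t) = m (h (x, s)) (h (x, t)) := by
  have hsurj := exists_iccMid_iccEndpoint_eq hab
  have recursion_iff (p : Fin 2 → A) (h : Icc a b → A) :=
    DigitRecursion.iff_endpoints_and_map_mid (p := p) (h := h) hm hit (isMidpoint_iccMid a b) hsurj
  obtain ⟨H, hH, hrec⟩ := exists_continuous_digitRecursion hab hm hit
  have hspec (x : X) := (recursion_iff _ _).1 (hrec ![f x, g x])
  refine ⟨fun q ↦ H (![f q.1, g q.1], q.2),
    ⟨by fun_prop, fun x ↦ (hspec x).1 0, fun x ↦ (hspec x).1 1, fun x ↦ (hspec x).2⟩, ?_⟩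
  rintro k ⟨-, hka, hkb, hkmid⟩
  ext ⟨x, t⟩
  have hk := (recursion_iff ![f x, g x] fun t ↦ k (x, t)).2
    ⟨Fin.forall_fin_two.2 ⟨hka x, hkb x⟩, hkmid x⟩
  exact congrFun (hk.unique hit hsurj (hrec _)) t

/-- `([-1,1], ⊕, -1, 1)` with the Euclidean topology is a parametrised interval
object in the category of topological spaces. -/
theorem parametrised_interval_object_in_Top
    (X : Type) [TopologicalSpace X] (A : Type) [TopologicalSpace A]
    (m : A → A → A) (hcont : Continuous fun p : A × A => m p.1 p.2)
    (hm : IsMidpoint m) (hc : Cancellative m) (hit : TopIterative m)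
    (f g : X → A) (hf : Continuous f) (hg : Continuous g) :
    ∃! h : X × Set.Icc (-1 : ℝ) 1 → A,
      Continuous h ∧
      (∀ x, h (x, ⟨-1, le_refl (-1 : ℝ), by norm_num⟩) = f x) ∧
      (∀ x, h (x, ⟨1, by norm_num, le_refl (1 : ℝ)⟩) = g x) ∧
      ∀ x s t, h (x, iccMid (-1) 1 s t) = m (h (x, s)) (h (x, t)) :=
  parametrised_interval_object_in_Top_general (by norm_num) hm hit hf hg
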